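/- Fix a real number c with 0 < c < 1. Then td(0) = 12(1−c²) > 0, td'(0) = −(12/c)√(1−c²)(3+c²) < 0, td(β₃) = 12(1−c)⁴((2+c) − √(1+c)√(3+c))² > 0, and td(δ₂) < 0. -/

import Mathlib

noncomputable def beta3 (c : ℝ) : ℝ :=
  (c*Real.sqrt (1 - c^2) + Real.sqrt (3 - 8*c + 6*c^2 - c^4))/2
noncomputable def delta2 (c : ℝ) : ℝ :=
  (-2*c + Real.sqrt (9 - 2*c^2 - 3*c^4))/(6*Real.sqrt (1 - c^2))

/-- `td(ξ)` equals the third derivative at `t = 1` of the quartic G² radial error `ψ₄(·,ξ)`. -/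
noncomputable def td (c ξ : ℝ) : ℝ :=
  (48*Real.sqrt (1 - c^2)/c)*ξ^3 + 48*ξ^2
    - 12*Real.sqrt (1 - c^2)*(3/c + c)*ξ + 12*(1 - c^2)

/-!
The point `δ₂` is the critical point of the cubic `td c` at which it attains its minimum over
`[0, ∞)`, so `td c δ₂` is at most the value at the convenient point `ξ = √(1 - c²) / 2`, which
is `-12 (1 - c²) (1 - c)² / c < 0`. The point `β₃` is a root of the quadratic
`ξ² - c √(1 - c²) ξ - (1 - c) (3 - 5 c) / 4`; reducing `td c` modulo this quadratic leaves an
expression that is linear in `β₃`, and it becomes a multiple of a square once `β₃` is written in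
terms of `√(1 + c) * √(3 + c)`.
-/

section SignsOfTd

variable {c : ℝ}

theorem td_zero_right (c : ℝ) : td c 0 = 12 * (1 - c ^ 2) := by
  simp [td]

theorem hasDerivAt_td (c ξ : ℝ) :
    HasDerivAt (td c)
      (144 * √(1 - c ^ 2) / c * ξ ^ 2 + 96 * ξ - 12 * √(1 - c ^ 2) * (3 / c + c)) ξ := by
  have hcube := (hasDerivAt_pow 3 ξ).const_mul (48 * √(1 - c ^ 2) / c)
  have hsq := (hasDerivAt_pow 2 ξ).const_mul 48
  have hlin := (hasDerivAt_id' ξ).const_mul (12 * √(1 - c ^ 2) * (3 / c + c))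
  refine (((hcube.add hsq).sub hlin).add_const (12 * (1 - c ^ 2))).congr_deriv ?_
  norm_num
  ring

theorem deriv_td_zero (hc : c ≠ 0) :
    deriv (td c) 0 = -(12 / c) * √(1 - c ^ 2) * (3 + c ^ 2) := by
  rw [(hasDerivAt_td c 0).deriv]
  field

theorem sqrt_one_sub_sq_eq_mul (hc : c ≤ 1) : √(1 - c ^ 2) = √(1 - c) * √(1 + c) := by
  rw [← Real.sqrt_mul (sub_nonneg.2 hc)]
  ring_nf

theorem sqrt_beta3_radicand (hc : c ≤ 1) :
    √(3 - 8 * c + 6 * c ^ 2 - c ^ 4) = (1 - c) * (√(1 - c) * √(3 + c)) := by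
  have hc' : 0 ≤ 1 - c := sub_nonneg.2 hc
  have hfactor : 3 - 8 * c + 6 * c ^ 2 - c ^ 4 = (1 - c) ^ 2 * ((1 - c) * (3 + c)) := by ring
  rw [hfactor, Real.sqrt_mul (sq_nonneg _), Real.sqrt_sq hc', Real.sqrt_mul hc']

theorem sqrt_mul_beta3 (hc₀ : -1 ≤ c) (hc₁ : c ≤ 1) :
    √(1 - c ^ 2) * beta3 c
      = (1 - c) / 2 * (c * (1 + c) + (1 - c) * (√(1 + c) * √(3 + c))) := by
  have hsub : √(1 - c) ^ 2 = 1 - c := Real.sq_sqrt (by linarith)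
  have hadd : √(1 + c) ^ 2 = 1 + c := Real.sq_sqrt (by linarith)
  calc √(1 - c ^ 2) * beta3 c
      = √(1 - c) ^ 2 / 2 * (c * √(1 + c) ^ 2 + (1 - c) * (√(1 + c) * √(3 + c))) := by
        rw [beta3, sqrt_beta3_radicand hc₁, sqrt_one_sub_sq_eq_mul hc₁]
        ring
    _ = _ := by rw [hsub, hadd]

theorem beta3_sq (hc₀ : -1 ≤ c) (hc₁ : c ≤ 1) :
    beta3 c ^ 2 = c * √(1 - c ^ 2) * beta3 c + (1 - c) * (3 - 5 * c) / 4 := by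
  have hs : √(1 - c ^ 2) ^ 2 = 1 - c ^ 2 := Real.sq_sqrt (by nlinarith)
  have hr : (2 * beta3 c - c * √(1 - c ^ 2)) ^ 2 = (1 - c) ^ 3 * (3 + c) := by
    have hsub : √(1 - c) ^ 2 = 1 - c := Real.sq_sqrt (by linarith)
    have hadd : √(3 + c) ^ 2 = 3 + c := Real.sq_sqrt (by linarith)
    calc (2 * beta3 c - c * √(1 - c ^ 2)) ^ 2
        = (1 - c) ^ 2 * (√(1 - c) ^ 2 * √(3 + c) ^ 2) := by
          rw [beta3, sqrt_beta3_radicand hc₁]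
          ring
      _ = (1 - c) ^ 3 * (3 + c) := by
          rw [hsub, hadd]
          ring
  linear_combination hr / 4 - c ^ 2 / 4 * hs

theorem td_beta3_eq_linear (hc : c ≠ 0) (hc₀ : -1 ≤ c) (hc₁ : c ≤ 1) :
    td c (beta3 c)
      = 12 * (1 - c) ^ 2 *
        ((1 - c) * (7 + 5 * c) - 4 * (2 + c) * (√(1 - c ^ 2) * beta3 c)) := by
  have hs : √(1 - c ^ 2) ^ 2 = 1 - c ^ 2 := Real.sq_sqrt (by nlinarith)
  have hβ := beta3_sq hc₀ hc₁
  have hquad : td c (beta3 c)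
      = 48 * (2 - c ^ 2) * beta3 c ^ 2 - 48 * (2 - c) * √(1 - c ^ 2) * beta3 c
        + 12 * (1 - c ^ 2) := by
    rw [td]
    field_simp
    linear_combination 48 * √(1 - c ^ 2) * beta3 c * hβ + 48 * c * beta3 c ^ 2 * hs
  rw [hquad, hβ]
  ring

theorem td_beta3 (hc : c ≠ 0) (hc₀ : -1 ≤ c) (hc₁ : c ≤ 1) :
    td c (beta3 c) = 12 * (1 - c) ^ 4 * ((2 + c) - √(1 + c) * √(3 + c)) ^ 2 := by
  have hadd₁ : √(1 + c) ^ 2 = 1 + c := Real.sq_sqrt (by linarith)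
  have hadd₃ : √(3 + c) ^ 2 = 3 + c := Real.sq_sqrt (by linarith)
  have hprod : (√(1 + c) * √(3 + c)) ^ 2 = (1 + c) * (3 + c) := by rw [mul_pow, hadd₁, hadd₃]
  rw [td_beta3_eq_linear hc hc₀ hc₁, sqrt_mul_beta3 hc₀ hc₁]
  linear_combination -12 * (1 - c) ^ 4 * hprod

theorem sqrt_one_add_mul_sqrt_three_add_lt (hc : -1 ≤ c) : √(1 + c) * √(3 + c) < 2 + c := by
  rw [← Real.sqrt_mul (by linarith), Real.sqrt_lt' (by linarith)]
  linarith

theorem td_beta3_pos (hc : c ≠ 0) (hc₀ : -1 ≤ c) (hc₁ : c < 1) : 0 < td c (beta3 c) := by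
  have : 0 < 1 - c := sub_pos.2 hc₁
  have hgap := sub_pos.2 (sqrt_one_add_mul_sqrt_three_add_lt hc₀)
  rw [td_beta3 hc hc₀ hc₁.le]
  positivity

theorem sqrt_mul_delta2 (hc : c ^ 2 < 1) :
    √(1 - c ^ 2) * delta2 c = (-2 * c + √(9 - 2 * c ^ 2 - 3 * c ^ 4)) / 6 := by
  have hs : √(1 - c ^ 2) ≠ 0 := (Real.sqrt_pos.2 (sub_pos.2 hc)).ne'
  rw [delta2]
  field

theorem deriv_td_delta2 (hc : c ≠ 0) (hc₁ : c ^ 2 < 1) : deriv (td c) (delta2 c) = 0 := by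
  have hs₀ : √(1 - c ^ 2) ≠ 0 := (Real.sqrt_pos.2 (sub_pos.2 hc₁)).ne'
  have hs : √(1 - c ^ 2) ^ 2 = 1 - c ^ 2 := Real.sq_sqrt (sub_pos.2 hc₁).le
  have hR : √(9 - 2 * c ^ 2 - 3 * c ^ 4) ^ 2 = 9 - 2 * c ^ 2 - 3 * c ^ 4 :=
    Real.sq_sqrt (by nlinarith)
  have hquad : 12 * (√(1 - c ^ 2) * delta2 c) ^ 2 + 8 * c * (√(1 - c ^ 2) * delta2 c)
      - (1 - c ^ 2) * (3 + c ^ 2) = 0 := by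
    rw [sqrt_mul_delta2 hc₁]
    linear_combination hR / 3
  rw [(hasDerivAt_td c (delta2 c)).deriv]
  refine (mul_eq_zero.1 (?_ : √(1 - c ^ 2) * _ = 0)).resolve_left hs₀
  field_simp
  linear_combination 12 * hquad - 12 * (3 + c ^ 2) * hs

theorem td_sub_td_of_deriv_eq_zero {η : ℝ} (hη : deriv (td c) η = 0) (ξ : ℝ) :
    td c ξ - td c η = 48 * (ξ - η) ^ 2 * (√(1 - c ^ 2) / c * (ξ + 2 * η) + 1) := by
  rw [(hasDerivAt_td c η).deriv] at hη
  simp only [td]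
  linear_combination (ξ - η) * hη

theorem td_delta2_le (hc₀ : 0 < c) (hc₁ : c < 1) {ξ : ℝ} (hξ : 0 ≤ ξ) :
    td c (delta2 c) ≤ td c ξ := by
  have hc : c ^ 2 < 1 := pow_lt_one₀ hc₀.le hc₁ two_ne_zero
  have hfactor : √(1 - c ^ 2) / c * (ξ + 2 * delta2 c) + 1
      = (3 * √(1 - c ^ 2) * ξ + c + √(9 - 2 * c ^ 2 - 3 * c ^ 4)) / (3 * c) := by
    have hδ := sqrt_mul_delta2 hc
    generalize √(9 - 2 * c ^ 2 - 3 * c ^ 4) = R at hδ ⊢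
    field_simp
    linear_combination 6 * hδ
  rw [← sub_nonneg, td_sub_td_of_deriv_eq_zero (deriv_td_delta2 hc₀.ne' hc), hfactor]
  positivity

theorem td_half_sqrt_one_sub_sq (hc : c ≠ 0) (hc₁ : c ^ 2 ≤ 1) :
    td c (√(1 - c ^ 2) / 2) = -(12 * (1 - c ^ 2) * (1 - c) ^ 2 / c) := by
  have hs : √(1 - c ^ 2) ^ 2 = 1 - c ^ 2 := Real.sq_sqrt (sub_nonneg.2 hc₁)
  calc td c (√(1 - c ^ 2) / 2)
      = 6 * √(1 - c ^ 2) ^ 2 / c * (√(1 - c ^ 2) ^ 2 + 2 * c - (3 + c ^ 2)) + 12 * (1 - c ^ 2) := by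
        rw [td]
        field
    _ = -(12 * (1 - c ^ 2) * (1 - c) ^ 2 / c) := by
        rw [hs]
        field

theorem td_delta2_neg (hc₀ : 0 < c) (hc₁ : c < 1) : td c (delta2 c) < 0 := by
  have hc : c ^ 2 < 1 := pow_lt_one₀ hc₀.le hc₁ two_ne_zero
  have : 0 < 1 - c ^ 2 := sub_pos.2 hc
  have : 0 < 1 - c := sub_pos.2 hc₁
  calc td c (delta2 c) ≤ td c (√(1 - c ^ 2) / 2) := td_delta2_le hc₀ hc₁ (by positivity)
    _ = -(12 * (1 - c ^ 2) * (1 - c) ^ 2 / c) := td_half_sqrt_one_sub_sq hc₀.ne' hc.le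
    _ < 0 := neg_neg_of_pos (by positivity)

end SignsOfTd

/-- Sign properties of `td` at `0`, `β₃` and `δ₂`. -/
theorem stmt_8 (c : ℝ) (hc0 : 0 < c) (hc1 : c < 1) :
    (td c 0 = 12*(1 - c^2) ∧ 0 < td c 0) ∧
    (deriv (td c) 0 = -(12/c)*Real.sqrt (1 - c^2)*(3 + c^2) ∧ deriv (td c) 0 < 0) ∧
    (td c (beta3 c) = 12*(1 - c)^4*((2 + c) - Real.sqrt (1 + c)*Real.sqrt (3 + c))^2 ∧
      0 < td c (beta3 c)) ∧
    td c (delta2 c) < 0 := by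
  have hsq : 0 < 1 - c ^ 2 := sub_pos.2 (pow_lt_one₀ hc0.le hc1 two_ne_zero)
  have hc : -1 ≤ c := by linarith
  refine ⟨⟨td_zero_right c, ?_⟩, ⟨deriv_td_zero hc0.ne', ?_⟩,
    ⟨td_beta3 hc0.ne' hc hc1.le, td_beta3_pos hc0.ne' hc hc1⟩, td_delta2_neg hc0 hc1⟩
  · rw [td_zero_right]
    positivity
  · rw [deriv_td_zero hc0.ne', neg_mul, neg_mul]
    exact neg_neg_of_pos (by positivity)
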